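/- arXiv:2309.03068 — 2 statements merged into one kernel-verified Lean document; each statement's English description precedes it below -/
import Mathlib

section
/- Let δ ∈ (0,1] and let μ, ν be Borel probability measures on [-1,1]. Set A := ∫_{|ξ|≤2/δ} |μ^(ξ)|² dξ and B := ∫_{|ξ|≤2/δ} |ν^(ξ)|² dξ. Then for all ξ with 1 ≤ |ξ| ≤ δ^{-1}, |∫∫ e^{-2πiξxy} dμ(x)dν(y)| ≤ C(√(AB/|ξ|) + δ) for an absolute constant C. -/
open MeasureTheory

/-- Fourier transform of a measure: `σ^(ξ) = ∫ e^{-2πiξt} dσ(t)`. -/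
noncomputable def ft (σ : Measure ℝ) (ξ : ℝ) : ℂ :=
  ∫ t, Complex.exp (-(2 * Real.pi * ξ * t) * Complex.I) ∂σ

/-!
Write `σ` for the dilate of `μ` by `ξ`, a measure on `[-|ξ|, |ξ|] ⊆ [-δ⁻¹, δ⁻¹]`; the double
integral is `∫ ν^ dσ`. Let `b` be a smooth bump equal to `1` on `[-1, 1]` and supported in
`[-2, 2]`, and let `F = 𝓕⁻ (b · σ^)`, which is `σ` mollified by the kernel `𝓕⁻ b`. As `b = 1` on the
support of `ν`, the multiplication formula gives `∫ ν^ dσ = ∫ σ^ dν = ∫ b σ^ dν = ∫ ν^(η) F(η) dη`.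

* On `|η| ≤ 2/δ`, Cauchy–Schwarz and Plancherel bound the integral by `√(B ∫_{|t| ≤ 2} |σ^|²)`,
  and `∫_{|t| ≤ 2} |σ^|² ≤ A/|ξ|` because `σ^(t) = μ^(ξt)`.
* On `|η| > 2/δ`, the point `η` has distance at least `δ⁻¹` from the support of `σ`, so the decay of
  `𝓕⁻ b` gives `∫ |F| ≤ δ ∫ |s| |𝓕⁻ b(s)| ds`, while `|ν^| ≤ 1`.
-/

open Metric Set
open scoped ContDiff FourierTransform SchwartzMap

lemma norm_integral_mul_le_sqrt_mul_sqrt {α : Type*} [MeasurableSpace α] {μ : Measure α}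
    {f g : α → ℂ} (hf : MemLp f 2 μ) (hg : MemLp g 2 μ) :
    ‖∫ x, f x * g x ∂μ‖ ≤ √(∫ x, ‖f x‖ ^ 2 ∂μ) * √(∫ x, ‖g x‖ ^ 2 ∂μ) := by
  have holder := integral_mul_norm_le_Lp_mul_Lq Real.HolderConjugate.two_two
    (f := f) (g := g) (μ := μ) (by simpa using hf) (by simpa using hg)
  simp only [Real.rpow_two, ← Real.sqrt_eq_rpow, ← norm_mul] at holder
  exact (norm_integral_le_integral_norm _).trans holder

section FourierTransformOfMeasure

variable (σ ν : Measure ℝ)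

lemma ft_eq_fourierIntegral :
    ft σ = VectorFourier.fourierIntegral 𝐞 σ (innerₗ ℝ) (fun _ ↦ (1 : ℂ)) := by
  ext ξ
  rw [Real.vector_fourierIntegral_eq_integral_exp_smul, ft]
  congr with t
  simp [mul_assoc, mul_left_comm (ξ : ℂ)]

lemma ft_map_const_mul (c t : ℝ) : ft (σ.map (c * ·)) t = ft σ (c * t) := by
  rw [ft, integral_map (by fun_prop) (by fun_prop), ft]
  congr! 4 with x
  push_cast
  ring

lemma norm_ft_le (ξ : ℝ) : ‖ft σ ξ‖ ≤ σ.real univ := by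
  rw [ft_eq_fourierIntegral]
  simpa using VectorFourier.norm_fourierIntegral_le_integral_norm 𝐞 σ (innerₗ ℝ)
    (fun _ ↦ (1 : ℂ)) ξ

lemma contDiff_ft [IsFiniteMeasure σ] (hσ : ∀ k : ℕ, MemLp id k σ) : ContDiff ℝ ∞ (ft σ) := by
  have ft_eq_charFun : ft σ = fun ξ ↦ charFun σ (-(2 * Real.pi) * ξ) := by
    ext ξ
    rw [charFun_apply, ft]
    congr! 3 with t
    simp
  rw [ft_eq_charFun]
  exact (contDiff_charFun' hσ).comp (by fun_prop)

variable [IsFiniteMeasure σ] [IsFiniteMeasure ν]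

lemma continuous_ft : Continuous (ft σ) := by
  rw [ft_eq_fourierIntegral]
  exact VectorFourier.fourierIntegral_continuous Real.continuous_fourierChar continuous_inner
    (integrable_const 1)

lemma integral_ft_mul {g : ℝ → ℂ} (hg : Integrable g) :
    ∫ ξ, ft σ ξ * g ξ = ∫ t, 𝓕 g t ∂σ := by
  simpa [ft_eq_fourierIntegral, Real.fourier_eq] using!
    VectorFourier.integral_fourierIntegral_smul_eq_flip (μ := σ) (L := innerₗ ℝ)
      Real.continuous_fourierChar continuous_inner (integrable_const (1 : ℂ)) hg

lemma integral_ft_comm : ∫ t, ft σ t ∂ν = ∫ t, ft ν t ∂σ := by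
  simpa [ft_eq_fourierIntegral] using
    VectorFourier.integral_fourierIntegral_smul_eq_flip (μ := σ) (ν := ν) (L := innerₗ ℝ)
      Real.continuous_fourierChar continuous_inner (integrable_const (1 : ℂ))
      (integrable_const (1 : ℂ))

lemma fourierInv_mul_ft {g : ℝ → ℂ} (hg : Integrable g) (η : ℝ) :
    𝓕⁻ (fun t ↦ g t * ft σ t) η = ∫ a, 𝓕⁻ g (η - a) ∂σ := by
  have hmod : Integrable (fun t ↦ 𝐞 (t * η) • g t) := by
    simpa [mul_comm] using (Real.fourierIntegral_convergent_iff (V := ℝ) (-η)).2 hg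
  calc 𝓕⁻ (fun t ↦ g t * ft σ t) η = ∫ t, ft σ t * (𝐞 (t * η) • g t) := by
        simp only [Real.fourierInv_eq, Circle.smul_def]
        congr! 2 with t
        simp only [RCLike.inner_apply, Real.ringHom_apply, smul_eq_mul]
        ring_nf
    _ = ∫ a, 𝓕 (fun t ↦ 𝐞 (t * η) • g t) a ∂σ := integral_ft_mul σ hmod
    _ = ∫ a, 𝓕⁻ g (η - a) ∂σ := by
        congr! 2 with a
        rw [Real.fourier_real_eq, Real.fourierInv_eq]
        congr! 2 with t
        rw [smul_smul, ← AddChar.map_add_eq_mul]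
        congr 2
        simp only [RCLike.inner_apply, Real.ringHom_apply]
        ring

end FourierTransformOfMeasure

lemma memLp_id_of_ae_mem_closedBall {σ : Measure ℝ} [IsFiniteMeasure σ] {R : ℝ}
    (hσ : ∀ᵐ x ∂σ, x ∈ closedBall 0 R) (p : ENNReal) : MemLp id p σ :=
  .of_bound aestronglyMeasurable_id R (by simpa using hσ)

lemma setIntegral_norm_ft_map_const_mul_sq (μ : Measure ℝ) {c ρ : ℝ} (hc : c ≠ 0) (hρ : 0 ≤ ρ) :
    ∫ t in closedBall 0 ρ, ‖ft (μ.map (c * ·)) t‖ ^ 2 =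
      (∫ u in closedBall 0 (|c| * ρ), ‖ft μ u‖ ^ 2) / |c| := by
  have hsubst := Measure.setIntegral_comp_smul volume (fun u ↦ ‖ft μ u‖ ^ 2)
    (closedBall 0 ρ) hc
  simp only [smul_closedBall _ _ hρ, Real.norm_eq_abs, Module.finrank_self, pow_one, abs_inv,
    smul_eq_mul, mul_zero] at hsubst
  simp only [ft_map_const_mul, hsubst, div_eq_inv_mul]

lemma integrable_comp_sub_prod {E : Type*} [NormedAddCommGroup E] [NormedSpace ℝ E]
    {f : ℝ → E} (hf : Integrable f) (σ : Measure ℝ) [IsFiniteMeasure σ] :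
    Integrable (fun p : ℝ × ℝ ↦ f (p.1 - p.2)) (volume.prod σ) := by
  simpa using (integrable_const (1 : ℝ) (μ := σ)).convolution_integrand
    (ContinuousLinearMap.lsmul ℝ ℝ) hf

lemma integral_integral_comp_sub {E : Type*} [NormedAddCommGroup E] [NormedSpace ℝ E]
    [CompleteSpace E] {f : ℝ → E} (hf : Integrable f) (σ : Measure ℝ) [IsFiniteMeasure σ] :
    ∫ η, ∫ a, f (η - a) ∂σ = σ.real univ • ∫ s, f s := by
  rw [integral_integral_swap (integrable_comp_sub_prod hf σ)]
  simp only [integral_sub_right_eq_self f, integral_const]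

lemma setIntegral_compl_norm_integral_comp_sub_le {E : Type*} [NormedAddCommGroup E]
    [NormedSpace ℝ E] {σ : Measure ℝ} [IsFiniteMeasure σ] {ψ : ℝ → E} {R r : ℝ} (hr : 0 < r)
    (hσ : ∀ᵐ a ∂σ, a ∈ closedBall 0 R) (hψ : Integrable (fun s ↦ ‖s‖ * ‖ψ s‖)) :
    ∫ η in (closedBall 0 (R + r))ᶜ, ‖∫ a, ψ (η - a) ∂σ‖ ≤
      r⁻¹ * σ.real univ * ∫ s, ‖s‖ * ‖ψ s‖ := by
  let m : ℝ → ℝ := fun s ↦ r⁻¹ * (‖s‖ * ‖ψ s‖)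
  have hm : Integrable m := hψ.const_mul _
  have hm_nonneg (s : ℝ) : 0 ≤ m s := by positivity
  have norm_le (s : ℝ) (hs : r ≤ ‖s‖) : ‖ψ s‖ ≤ m s := by
    simp only [m, ← mul_assoc]
    exact le_mul_of_one_le_left (norm_nonneg _) ((one_le_inv_mul₀ hr).2 hs)
  have hm_prod := integrable_comp_sub_prod hm σ
  have pointwise : ∀ᵐ η, η ∈ (closedBall 0 (R + r))ᶜ →
      ‖∫ a, ψ (η - a) ∂σ‖ ≤ ∫ a, m (η - a) ∂σ := by
    filter_upwards [hm_prod.prod_right_ae] with η hη_int hη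
    refine norm_integral_le_of_norm_le hη_int ?_
    filter_upwards [hσ] with a ha
    simp only [mem_compl_iff, mem_closedBall_zero_iff, not_le] at hη ha
    exact norm_le _ (by linarith [norm_sub_norm_le η a])
  calc ∫ η in (closedBall 0 (R + r))ᶜ, ‖∫ a, ψ (η - a) ∂σ‖
      ≤ ∫ η in (closedBall 0 (R + r))ᶜ, ∫ a, m (η - a) ∂σ :=
        integral_mono_of_nonneg (.of_forall fun _ ↦ norm_nonneg _)
          hm_prod.integral_prod_left.integrableOn
          ((ae_restrict_iff' measurableSet_closedBall.compl).2 pointwise)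
    _ ≤ ∫ η, ∫ a, m (η - a) ∂σ :=
        setIntegral_le_integral hm_prod.integral_prod_left
          (.of_forall fun η ↦ integral_nonneg fun a ↦ hm_nonneg (η - a))
    _ = r⁻¹ * σ.real univ * ∫ s, ‖s‖ * ‖ψ s‖ := by
        rw [integral_integral_comp_sub hm σ, integral_const_mul, smul_eq_mul]
        ring

section Bump

variable (b : ContDiffBump (0 : ℝ))

/-- The localisation `b · f` of a smooth function to the ball of radius `b.rOut`, as a Schwartz
function. With `f = ft σ`, its inverse Fourier transform is the mollification of `σ` by the
kernel `𝓕⁻ b`. -/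
noncomputable def bumpMul {f : ℝ → ℂ} (hf : ContDiff ℝ ∞ f) : 𝓢(ℝ, ℂ) :=
  HasCompactSupport.toSchwartzMap (f := fun t ↦ (b t : ℂ) * f t)
    (b.hasCompactSupport.comp_left Complex.ofReal_zero).mul_right
    ((Complex.ofRealCLM.contDiff.comp b.contDiff).mul hf)

lemma bumpMul_apply {f : ℝ → ℂ} (hf : ContDiff ℝ ∞ f) (t : ℝ) :
    bumpMul b hf t = b t * f t := rfl

lemma integrable_norm_mul_norm_fourierInv_bump :
    Integrable (fun s ↦ ‖s‖ * ‖𝓕⁻ (fun t ↦ (b t : ℂ)) s‖) := by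
  let χ : 𝓢(ℝ, ℂ) := bumpMul b (f := fun _ ↦ 1) contDiff_const
  have hχ : ⇑χ = fun t ↦ (b t : ℂ) := by
    ext t
    rw [bumpMul_apply, mul_one]
  rw [← hχ, ← SchwartzMap.fourierInv_coe]
  simpa using (𝓕⁻ χ : 𝓢(ℝ, ℂ)).integrable_pow_mul volume 1

lemma integral_norm_fourierInv_bumpMul_sq_le {f : ℝ → ℂ} (hf : ContDiff ℝ ∞ f) :
    ∫ η, ‖𝓕⁻ (bumpMul b hf) η‖ ^ 2 ≤ ∫ t in closedBall 0 b.rOut, ‖f t‖ ^ 2 := by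
  have plancherel : ∫ η, ‖𝓕⁻ (bumpMul b hf) η‖ ^ 2 = ∫ t, ‖bumpMul b hf t‖ ^ 2 := by
    simpa using (SchwartzMap.integral_norm_sq_fourier (𝓕⁻ (bumpMul b hf))).symm
  rw [plancherel, ← integral_indicator measurableSet_closedBall]
  have hint : IntegrableOn (fun t ↦ ‖f t‖ ^ 2) (closedBall 0 b.rOut) :=
    (hf.continuous.norm.pow 2).continuousOn.integrableOn_compact (isCompact_closedBall 0 b.rOut)
  refine integral_mono_of_nonneg (.of_forall fun _ ↦ sq_nonneg _)
    (hint.integrable_indicator measurableSet_closedBall) (.of_forall fun t ↦ ?_)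
  by_cases ht : t ∈ closedBall 0 b.rOut
  · simp only [indicator_of_mem ht, bumpMul_apply, norm_mul, Complex.norm_real,
      Real.norm_of_nonneg b.nonneg]
    exact pow_le_pow_left₀ (mul_nonneg b.nonneg (norm_nonneg _))
      (mul_le_of_le_one_left (norm_nonneg _) b.le_one) 2
  · have hbt : b t = 0 := b.zero_of_le_dist (not_le.1 ht).le
    simp [indicator_of_notMem ht, bumpMul_apply, hbt]

variable {σ ν : Measure ℝ} {R r : ℝ}

lemma norm_setIntegral_compl_ft_mul_fourierInv_bumpMul_le [IsFiniteMeasure σ]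
    (hσ : ContDiff ℝ ∞ (ft σ)) (hσR : ∀ᵐ a ∂σ, a ∈ closedBall 0 R) (hr : 0 < r) :
    ‖∫ η in (closedBall 0 (R + r))ᶜ, ft ν η * 𝓕⁻ (bumpMul b hσ) η‖ ≤
      r⁻¹ * (σ.real univ * ν.real univ) * ∫ s, ‖s‖ * ‖𝓕⁻ (fun t ↦ (b t : ℂ)) s‖ := by
  have hF (η : ℝ) : 𝓕⁻ (bumpMul b hσ) η = ∫ a, 𝓕⁻ (fun t ↦ (b t : ℂ)) (η - a) ∂σ := by
    rw [SchwartzMap.fourierInv_coe]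
    exact fourierInv_mul_ft σ b.integrable.ofReal η
  calc ‖∫ η in (closedBall 0 (R + r))ᶜ, ft ν η * 𝓕⁻ (bumpMul b hσ) η‖
      ≤ ∫ η in (closedBall 0 (R + r))ᶜ, ν.real univ * ‖𝓕⁻ (bumpMul b hσ) η‖ := by
        refine norm_integral_le_of_norm_le
          ((𝓕⁻ (bumpMul b hσ)).integrable.norm.const_mul _).integrableOn (.of_forall fun η ↦ ?_)
        rw [norm_mul]
        gcongr
        exact norm_ft_le ν η
    _ ≤ ν.real univ * (r⁻¹ * σ.real univ * ∫ s, ‖s‖ * ‖𝓕⁻ (fun t ↦ (b t : ℂ)) s‖) := by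
        simp only [integral_const_mul, hF]
        gcongr
        exact setIntegral_compl_norm_integral_comp_sub_le hr hσR
          (integrable_norm_mul_norm_fourierInv_bump b)
    _ = _ := by ring

lemma integral_ft_eq_integral_ft_mul_fourierInv_bumpMul [IsFiniteMeasure σ] [IsFiniteMeasure ν]
    (hσ : ContDiff ℝ ∞ (ft σ)) (hν : ∀ᵐ y ∂ν, y ∈ closedBall 0 b.rIn) :
    ∫ a, ft ν a ∂σ = ∫ η, ft ν η * 𝓕⁻ (bumpMul b hσ) η := by
  rw [integral_ft_mul ν (𝓕⁻ (bumpMul b hσ)).integrable, ← SchwartzMap.fourier_coe,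
    FourierTransform.fourier_fourierInv_eq, integral_ft_comm]
  refine integral_congr_ae ?_
  filter_upwards [hν] with y hy
  simp [bumpMul_apply, b.one_of_mem_closedBall hy]

lemma norm_setIntegral_ft_mul_fourierInv_bumpMul_le [IsFiniteMeasure ν]
    (hσ : ContDiff ℝ ∞ (ft σ)) {S : Set ℝ} (hS : volume S ≠ ⊤) :
    ‖∫ η in S, ft ν η * 𝓕⁻ (bumpMul b hσ) η‖ ≤
      √((∫ t in closedBall 0 b.rOut, ‖ft σ t‖ ^ 2) * ∫ η in S, ‖ft ν η‖ ^ 2) := by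
  have : IsFiniteMeasure (volume.restrict S) := isFiniteMeasure_restrict.2 hS
  have hF : MemLp (fun η ↦ 𝓕⁻ (bumpMul b hσ) η) 2 volume := (𝓕⁻ (bumpMul b hσ)).memLp 2
  have hft : MemLp (ft ν) 2 (volume.restrict S) :=
    .of_bound (continuous_ft ν).aestronglyMeasurable _ (.of_forall (norm_ft_le ν))
  have hL2 : ∫ η in S, ‖𝓕⁻ (bumpMul b hσ) η‖ ^ 2 ≤ ∫ t in closedBall 0 b.rOut, ‖ft σ t‖ ^ 2 :=
    (setIntegral_le_integral (by simpa using hF.integrable_norm_pow two_ne_zero)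
      (.of_forall fun _ ↦ by positivity)).trans (integral_norm_fourierInv_bumpMul_sq_le b hσ)
  calc ‖∫ η in S, ft ν η * 𝓕⁻ (bumpMul b hσ) η‖
      ≤ √(∫ η in S, ‖ft ν η‖ ^ 2) * √(∫ η in S, ‖𝓕⁻ (bumpMul b hσ) η‖ ^ 2) :=
        norm_integral_mul_le_sqrt_mul_sqrt hft (hF.restrict S)
    _ ≤ √(∫ η in S, ‖ft ν η‖ ^ 2) * √(∫ t in closedBall 0 b.rOut, ‖ft σ t‖ ^ 2) := by gcongr
    _ = _ := by rw [mul_comm, ← Real.sqrt_mul (integral_nonneg fun _ ↦ by positivity)]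

theorem norm_integral_ft_le [IsFiniteMeasure σ] [IsFiniteMeasure ν]
    (hν : ∀ᵐ y ∂ν, y ∈ closedBall 0 b.rIn) (hσ : ∀ᵐ a ∂σ, a ∈ closedBall 0 R) (hr : 0 < r) :
    ‖∫ a, ft ν a ∂σ‖ ≤
      √((∫ t in closedBall 0 b.rOut, ‖ft σ t‖ ^ 2) *
          ∫ η in closedBall 0 (R + r), ‖ft ν η‖ ^ 2) +
        r⁻¹ * (σ.real univ * ν.real univ) * ∫ s, ‖s‖ * ‖𝓕⁻ (fun t ↦ (b t : ℂ)) s‖ := by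
  have hsmooth : ContDiff ℝ ∞ (ft σ) :=
    contDiff_ft σ fun k ↦ memLp_id_of_ae_mem_closedBall hσ k
  have hint : Integrable (fun η ↦ ft ν η * 𝓕⁻ (bumpMul b hsmooth) η) :=
    (𝓕⁻ (bumpMul b hsmooth)).integrable.bdd_mul (continuous_ft ν).aestronglyMeasurable
      (.of_forall (norm_ft_le ν))
  rw [integral_ft_eq_integral_ft_mul_fourierInv_bumpMul b hsmooth hν,
    ← integral_add_compl (measurableSet_closedBall (x := 0) (ε := R + r)) hint]
  exact norm_add_le_of_le
    (norm_setIntegral_ft_mul_fourierInv_bumpMul_le b hsmooth measure_closedBall_lt_top.ne)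
    (norm_setIntegral_compl_ft_mul_fourierInv_bumpMul_le b hsmooth hσ hr)

end Bump

lemma integral_integral_exp_eq_integral_ft_map (μ ν : Measure ℝ) [IsFiniteMeasure ν] (ξ : ℝ) :
    ∫ x, ∫ y, Complex.exp (-(2 * Real.pi * ξ * (x * y)) * Complex.I) ∂ν ∂μ =
      ∫ a, ft ν a ∂(μ.map (ξ * ·)) := by
  rw [integral_map (by fun_prop) (continuous_ft ν).aestronglyMeasurable]
  simp only [ft]
  congr! 6 with x y
  push_cast
  ring

theorem norm_integral_integral_exp_le (b : ContDiffBump (0 : ℝ)) {μ ν : Measure ℝ}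
    [IsFiniteMeasure μ] [IsFiniteMeasure ν] {R : ℝ} (hR : 0 < R)
    (hμ : ∀ᵐ x ∂μ, x ∈ closedBall 0 1) (hν : ∀ᵐ y ∂ν, y ∈ closedBall 0 b.rIn)
    {ξ : ℝ} (hξ0 : ξ ≠ 0) (hξR : |ξ| ≤ R) :
    ‖∫ x, ∫ y, Complex.exp (-(2 * Real.pi * ξ * (x * y)) * Complex.I) ∂ν ∂μ‖ ≤
      √((∫ u in closedBall 0 (R * b.rOut), ‖ft μ u‖ ^ 2) *
          (∫ u in closedBall 0 (R + R), ‖ft ν u‖ ^ 2) / |ξ|) +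
        R⁻¹ * (μ.real univ * ν.real univ) * ∫ s, ‖s‖ * ‖𝓕⁻ (fun t ↦ (b t : ℂ)) s‖ := by
  have hdil : ∀ᵐ a ∂(μ.map (ξ * ·)), a ∈ closedBall 0 R := by
    refine (ae_map_iff (by fun_prop) measurableSet_closedBall).2 ?_
    filter_upwards [hμ] with x hx
    rw [← mem_closedBall, mem_closedBall_zero_iff, norm_mul, ← mul_one R]
    exact mul_le_mul hξR (mem_closedBall_zero_iff.1 hx) (norm_nonneg _) hR.le
  have hmass : (μ.map (ξ * ·)).real univ = μ.real univ := by
    simp [map_measureReal_apply (measurable_const_mul ξ)]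
  have hbound := norm_integral_ft_le b hν hdil hR
  rw [setIntegral_norm_ft_map_const_mul_sq μ hξ0 b.rOut_pos.le, hmass] at hbound
  have hmono : ∫ u in closedBall 0 (|ξ| * b.rOut), ‖ft μ u‖ ^ 2 ≤
      ∫ u in closedBall 0 (R * b.rOut), ‖ft μ u‖ ^ 2 := by
    refine setIntegral_mono_set ?_ (.of_forall fun _ ↦ by positivity)
      (closedBall_subset_closedBall (by have := b.rOut_pos; gcongr)).eventuallyLE
    exact ((continuous_ft μ).norm.pow 2).continuousOn.integrableOn_compact
      (isCompact_closedBall _ _)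
  rw [integral_integral_exp_eq_integral_ft_map]
  refine hbound.trans ?_
  rw [div_mul_eq_mul_div]
  gcongr

theorem stmt1_general :
    ∃ C > (0 : ℝ), ∀ δ > (0 : ℝ), ∀ μ ν : Measure ℝ, IsFiniteMeasure μ → IsFiniteMeasure ν →
      μ (Icc (-1 : ℝ) 1)ᶜ = 0 → ν (Icc (-1 : ℝ) 1)ᶜ = 0 →
      ∀ ξ : ℝ, ξ ≠ 0 → |ξ| ≤ δ⁻¹ →
      ‖∫ x, ∫ y, Complex.exp (-(2 * Real.pi * ξ * (x * y)) * Complex.I) ∂ν ∂μ‖ ≤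
        C * (√((∫ u in Icc (-(2 / δ)) (2 / δ), ‖ft μ u‖ ^ 2) *
              (∫ u in Icc (-(2 / δ)) (2 / δ), ‖ft ν u‖ ^ 2) / |ξ|) +
            δ * (μ.real univ * ν.real univ)) := by
  let b : ContDiffBump (0 : ℝ) := ⟨1, 2, one_pos, one_lt_two⟩
  set M : ℝ := ∫ s, ‖s‖ * ‖𝓕⁻ (fun t ↦ (b t : ℂ)) s‖
  have hM : 0 ≤ M := integral_nonneg fun _ ↦ by positivity
  refine ⟨1 + M, by positivity, fun δ hδ μ ν _ _ hμ hν ξ hξ0 hξ ↦ ?_⟩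
  have mem_ball {σ : Measure ℝ} (hσ : σ (Icc (-1 : ℝ) 1)ᶜ = 0) : ∀ᵐ x ∂σ, x ∈ closedBall 0 1 := by
    simpa only [Real.closedBall_eq_Icc, zero_sub, zero_add] using! hσ
  have hbound := norm_integral_integral_exp_le b (inv_pos.2 hδ) (mem_ball hμ) (mem_ball hν) hξ0 hξ
  have hrad : δ⁻¹ * b.rOut = 2 / δ ∧ δ⁻¹ + δ⁻¹ = 2 / δ := ⟨inv_mul_eq_div _ _, by ring⟩
  simp only [hrad, Real.closedBall_eq_Icc, zero_sub, zero_add, inv_inv] at hbound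
  refine hbound.trans ?_
  rw [mul_add, mul_comm _ M]
  gcongr
  · exact le_mul_of_one_le_left (Real.sqrt_nonneg _) (le_add_of_nonneg_right hM)
  · exact le_add_of_nonneg_left zero_le_one

/-- Lemma: for probability measures `μ, ν` on `[-1,1]`, with
`A = ∫_{|ξ|≤2/δ} |μ^|²` and `B = ∫_{|ξ|≤2/δ} |ν^|²`, one has
`|(μ⊠ν)^(ξ)| ≤ C(√(AB/|ξ|) + δ)` for all `1 ≤ |ξ| ≤ δ⁻¹`. -/
theorem stmt1 :
    ∃ C > (0:ℝ), ∀ δ : ℝ, δ ∈ Set.Ioc (0:ℝ) 1 →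
      ∀ μ ν : Measure ℝ, IsProbabilityMeasure μ → IsProbabilityMeasure ν →
      μ (Set.Icc (-1:ℝ) 1)ᶜ = 0 → ν (Set.Icc (-1:ℝ) 1)ᶜ = 0 →
      ∀ ξ : ℝ, 1 ≤ |ξ| → |ξ| ≤ δ⁻¹ →
      ‖∫ x, ∫ y, Complex.exp (-(2 * Real.pi * ξ * (x * y)) * Complex.I) ∂ν ∂μ‖ ≤
        C * (Real.sqrt ((∫ u in Set.Icc (-(2/δ)) (2/δ), ‖ft μ u‖ ^ 2) *
              (∫ u in Set.Icc (-(2/δ)) (2/δ), ‖ft ν u‖ ^ 2) / |ξ|) + δ) := by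
  obtain ⟨C, hC, hbound⟩ := stmt1_general
  exact ⟨C, hC, fun δ hδ μ ν _ _ hμ hν ξ hξ1 hξ ↦ by
    simpa using hbound δ hδ.1 μ ν inferInstance inferInstance hμ hν ξ
      (abs_pos.1 (one_pos.trans_le hξ1)) hξ⟩
end

section
/- Let δ ∈ (0,1], s,t ∈ [0,1], and let μ, ν be Borel probability measures on [-1,1] such that the δ-regularizations satisfy ‖μ_δ‖₂² ≤ δ^{-1+s} and ‖ν_δ‖₂² ≤ δ^{-1+t}. Then for all ξ with δ^{-1} ≤ |ξ| ≤ 2δ^{-1}, |∫∫ e^{-2πiξxy} dμ(x)dν(y)| ≤ C δ^{(s+t-1)/2} for an absolute constant C. -/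
open MeasureTheory

/-! Let `k` be the indicator of a ball of radius `r = δ / 64`. As `r * |ξ|` is small, `𝓕 k` is
almost constant at the scale of interest: `|𝓕 k (ξ • u)| ≥ |B_r| / 2` for `‖u‖ ≤ 1 + r`. Put
`φ x = (𝓕 k (ξ • x))⁻¹`. Writing `1 = φ x * 𝓕 k (ξ • x)` in the integral of `ν̂ (ξ • x)` against
`μ` and moving the Fourier transform to the other side turns this integral into
`∫ (φμ)^ (ξ • u) (ν * k) (u) du`. Dividing by `𝓕 k (ξ • u)` once more replaces `(φμ)^` by
`(φμ * k)^`, the transform of an `L²` function, so that Cauchy-Schwarz and Plancherel bound the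
integral by a multiple of `|B_r|⁻² |ξ|^(-d/2) ‖μ * k‖₂ ‖ν * k‖₂`. Finally `μ * k ≤ δ^d μ_δ`
pointwise. -/

section
open Metric Module Real FourierTransform SchwartzMap ContinuousLinearMap
open scoped Convolution ENNReal

/-- `𝓕[μ] f` is the Fourier transform of the vector measure `f μ`. -/
local notation "𝓕[" μ "]" => VectorFourier.fourierIntegral 𝐞 μ (innerₗ _)

theorem memLp_two_of_norm_le {α F : Type*} [MeasurableSpace α] {μ : Measure α}
    [NormedAddCommGroup F] {f : α → F} (hf : Integrable f μ) {M : ℝ} (hM : ∀ x, ‖f x‖ ≤ M) :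
    MemLp f 2 μ := by
  refine (memLp_two_iff_integrable_sq_norm hf.1).2 ?_
  simpa only [sq] using hf.norm.bdd_mul hf.norm.1 (.of_forall fun x ↦ (norm_norm _).trans_le (hM x))

theorem eLpNorm_two_eq_ofReal_sqrt {α F : Type*} [MeasurableSpace α] {μ : Measure α}
    [NormedAddCommGroup F] {f : α → F} (hf : MemLp f 2 μ) :
    eLpNorm f 2 μ = ENNReal.ofReal √(∫ x, ‖f x‖ ^ 2 ∂μ) := by
  simp [hf.eLpNorm_eq_integral_rpow_norm two_ne_zero ENNReal.ofNat_ne_top, sqrt_eq_rpow]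

theorem of_convolution_ne_zero {𝕜 G F₁ F₂ F₃ : Type*} [NontriviallyNormedField 𝕜] [AddGroup G]
    [MeasurableSpace G] [NormedAddCommGroup F₁] [NormedAddCommGroup F₂] [NormedAddCommGroup F₃]
    [NormedSpace 𝕜 F₁] [NormedSpace 𝕜 F₂] [NormedSpace 𝕜 F₃] [NormedSpace ℝ F₃] {μ : Measure G}
    {B : F₁ →L[𝕜] F₂ →L[𝕜] F₃} {f : G → F₁} {k : G → F₂} {p : G → Prop}
    (hp : ∀ᵐ y ∂μ, ∀ u, k (u - y) ≠ 0 → p u) {u : G} (hu : (f ⋆[B, μ] k) u ≠ 0) : p u := by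
  contrapose! hu
  refine integral_eq_zero_of_ae (hp.mono fun y hy ↦ ?_)
  simp [not_imp_comm.1 (hy u) hu]

theorem norm_convolution_le_of_norm_le {𝕜 G F₁ F₂ F₃ : Type*} [RCLike 𝕜] [AddGroup G]
    [MeasurableSpace G] [NormedAddCommGroup F₁] [NormedAddCommGroup F₂] [NormedAddCommGroup F₃]
    [NormedSpace 𝕜 F₁] [NormedSpace 𝕜 F₂] [NormedSpace 𝕜 F₃] [NormedSpace ℝ F₃] {μ : Measure G}
    (B : F₁ →L[𝕜] F₂ →L[𝕜] F₃) {f : G → F₁} {k : G → F₂} {M : ℝ} (hf : Integrable f μ)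
    (hM : ∀ x, ‖k x‖ ≤ M) (x : G) :
    ‖(f ⋆[B, μ] k) x‖ ≤ ‖B‖ * (∫ y, ‖f y‖ ∂μ) * M := by
  calc ‖(f ⋆[B, μ] k) x‖ ≤ ∫ y, ‖B‖ * ‖f y‖ * M ∂μ :=
        norm_integral_le_of_norm_le ((hf.norm.const_mul _).mul_const _)
          (.of_forall fun y ↦ (B.le_opNorm₂ _ _).trans (by gcongr; exact hM _))
    _ = _ := by rw [integral_mul_const, integral_const_mul]

variable {E : Type*} [NormedAddCommGroup E] [InnerProductSpace ℝ E] [MeasurableSpace E]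

theorem fourierIntegral_one_smul (ν : Measure E) (ξ : ℝ) (x : E) :
    𝓕[ν] (fun _ ↦ (1 : ℂ)) (ξ • x)
      = ∫ y, Complex.exp (-(2 * π * ξ * inner ℝ x y) * Complex.I) ∂ν := by
  refine integral_congr_ae (.of_forall fun y ↦ ?_)
  simp only [innerₗ_apply_apply, inner_smul_right, real_inner_comm x y, Circle.smul_def,
    fourierChar_apply, smul_eq_mul, mul_one]
  push_cast
  ring_nf

/-- The regularization `μ_δ` of a measure at scale `δ`: the convolution of `μ` with the approximate
identity `δ⁻ᵈ P(x / δ)`, where `d` is the dimension of the space. -/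
noncomputable def regularization (P : E → ℝ) (δ : ℝ) (μ : Measure E) (x : E) : ℝ :=
  ∫ y, (δ ^ finrank ℝ E)⁻¹ * P (δ⁻¹ • (x - y)) ∂μ

variable [BorelSpace E]

theorem measureReal_closedBall_le_regularization {P : E → ℝ} {μ : Measure E}
    [IsFiniteMeasure μ] {δ M r : ℝ} (hP : Measurable P) (hM : ∀ x, ‖P x‖ ≤ M)
    (hP_lower : ∀ x, (closedBall 0 (1 / 2)).indicator 1 x ≤ P x) (hδ : 0 < δ) (hr : r ≤ δ / 2)
    (x : E) : μ.real (closedBall x r) ≤ δ ^ finrank ℝ E * regularization P δ μ x := by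
  rw [regularization, integral_const_mul, mul_inv_cancel_left₀ (by positivity),
    ← integral_indicator_one measurableSet_closedBall]
  have indicator_le (y : E) : (closedBall x r).indicator 1 y ≤ P (δ⁻¹ • (x - y)) := by
    refine Set.indicator_apply_le' (fun hy ↦ ?_) fun _ ↦
      (Set.indicator_nonneg (fun _ _ ↦ zero_le_one) _).trans (hP_lower _)
    have dilate_mem : δ⁻¹ • (x - y) ∈ closedBall (0 : E) (1 / 2) := by
      rw [mem_closedBall_zero_iff, norm_smul, norm_inv, norm_of_nonneg hδ.le, inv_mul_le_iff₀ hδ,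
        ← dist_eq_norm, dist_comm]
      exact hy.trans (by linarith)
    exact (Set.indicator_of_mem dilate_mem _).symm.trans_le (hP_lower _)
  exact integral_mono ((integrable_const 1).indicator measurableSet_closedBall)
    (.of_bound (hP.comp (by fun_prop)).aestronglyMeasurable M (.of_forall fun y ↦ hM _))
    indicator_le

variable [FiniteDimensional ℝ E]

section Plancherel

theorem continuous_fourier_of_integrable {F : Type*} [NormedAddCommGroup F] [NormedSpace ℂ F]
    {f : E → F} (hf : Integrable f) : Continuous (𝓕 f) :=
  VectorFourier.fourierIntegral_continuous continuous_fourierChar continuous_inner hf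

variable {F : Type*} [NormedAddCommGroup F] [InnerProductSpace ℂ F] [CompleteSpace F]

/- Both sides are the Fourier transform of `f` as a tempered distribution. -/
theorem coeFn_fourier_toLp_two {f : E → F} (hf : Integrable f) (hf₂ : MemLp f 2) :
    (𝓕 (hf₂.toLp f) : Lp F 2 (volume : Measure E)) =ᵐ[volume] 𝓕 f := by
  refine ae_eq_of_integral_contDiff_smul_eq
    ((Lp.memLp _).locallyIntegrable (by norm_num))
    (continuous_fourier_of_integrable hf).locallyIntegrable fun g hg hgs ↦ ?_
  let γ : 𝓢(E, ℂ) := (hgs.comp_left Complex.ofReal_zero).toSchwartzMap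
    (Complex.ofRealCLM.contDiff.comp hg)
  have self_adjoint : ∫ x, γ x • 𝓕 f x = ∫ x, 𝓕 γ x • f x := by
    simpa only [flip_innerₗ] using! (VectorFourier.integral_fourierIntegral_smul_eq_flip
      (L := innerₗ E) continuous_fourierChar continuous_inner γ.integrable hf).symm
  have distributional : ∫ x, 𝓕 γ x • hf₂.toLp f x
      = ∫ x, γ x • (𝓕 (hf₂.toLp f) : Lp F 2 (volume : Measure E)) x := by
    simpa only [TemperedDistribution.fourier_apply, Lp.toTemperedDistribution_apply] using
      congrArg (· γ) (Lp.fourier_toTemperedDistribution_eq (hf₂.toLp f))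
  calc ∫ x, g x • (𝓕 (hf₂.toLp f) : Lp F 2 (volume : Measure E)) x
      = ∫ x, γ x • (𝓕 (hf₂.toLp f) : Lp F 2 (volume : Measure E)) x := rfl
    _ = ∫ x, 𝓕 γ x • f x := by
        rw [← distributional]
        exact integral_congr_ae (hf₂.coeFn_toLp.mono fun x hx ↦ congrArg (𝓕 γ x • ·) hx)
    _ = ∫ x, g x • 𝓕 f x := self_adjoint.symm

theorem eLpNorm_two_fourier {f : E → F} (hf : Integrable f) (hf₂ : MemLp f 2) :
    eLpNorm (𝓕 f) 2 volume = eLpNorm f 2 volume := by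
  rw [← eLpNorm_congr_ae (coeFn_fourier_toLp_two hf hf₂), ← eLpNorm_congr_ae hf₂.coeFn_toLp,
    ← Lp.enorm_def, ← Lp.enorm_def, ← ofReal_norm, ← ofReal_norm, Lp.norm_fourier_eq]

end Plancherel

theorem eLpNorm_comp_smul {F : Type*} [NormedAddCommGroup F] (μ : Measure E) [μ.IsAddHaarMeasure]
    (f : E → F) {r : ℝ} (hr : r ≠ 0) (p : ℝ≥0∞) :
    eLpNorm (fun x ↦ f (r • x)) p μ
      = ENNReal.ofReal |(r ^ finrank ℝ E)⁻¹| ^ (1 / p).toReal * eLpNorm f p μ := by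
  have hc : ENNReal.ofReal |(r ^ finrank ℝ E)⁻¹| ≠ 0 := by simp [hr]
  rw [← smul_eq_mul, ← eLpNorm_smul_measure_of_ne_zero hc, ← Measure.map_addHaar_smul μ hr]
  exact ((Homeomorph.smulOfNeZero r hr).measurableEmbedding.eLpNorm_map_measure).symm

section Convolution

variable {F₁ F₂ F₃ : Type*} [NormedAddCommGroup F₁] [NormedAddCommGroup F₂] [NormedAddCommGroup F₃]
  {μ : Measure E} [SFinite μ]

theorem fourier_convolution_measure [NormedSpace ℂ F₁] [NormedSpace ℂ F₂] [NormedSpace ℂ F₃]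
    [CompleteSpace F₁] [CompleteSpace F₂] [CompleteSpace F₃] (B : F₁ →L[ℂ] F₂ →L[ℂ] F₃)
    {f : E → F₁} {k : E → F₂} (hf : Integrable f μ) (hk : Integrable k) (w : E) :
    𝓕 (f ⋆[B, μ] k) w = B (𝓕[μ] f w) (𝓕 k w) := by
  have modulate (x : E) : 𝐞 (-inner ℝ x w) • (f ⋆[B, μ] k) x
      = ((fun y ↦ 𝐞 (-inner ℝ y w) • f y) ⋆[B, μ] fun y ↦ 𝐞 (-inner ℝ y w) • k y) x := by
    simp only [convolution_def, Circle.smul_def, map_smul, smul_apply, ← integral_smul, smul_smul]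
    congr with y
    rw [← Circle.coe_mul, ← AddChar.map_add_eq_mul, inner_sub_left]
    congr 4
    ring
  simp only [fourier_eq, modulate]
  exact integral_convolution B
    ((VectorFourier.fourierIntegral_convergent_iff (L := innerₗ E) continuous_fourierChar
      continuous_inner w).2 hf) ((fourierIntegral_convergent_iff w).2 hk)

theorem integrable_convolution_measure {𝕜 : Type*} [RCLike 𝕜] [NormedSpace 𝕜 F₁]
    [NormedSpace 𝕜 F₂] [NormedSpace 𝕜 F₃] [NormedSpace ℝ F₃] (B : F₁ →L[𝕜] F₂ →L[𝕜] F₃)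
    {f : E → F₁} {k : E → F₂} (hf : Integrable f μ) (hk : Integrable k) :
    Integrable (f ⋆[B, μ] k) :=
  (hf.convolution_integrand B hk).integral_prod_left

end Convolution

theorem norm_fourier_sub_integral_le {F : Type*} [NormedAddCommGroup F] [NormedSpace ℂ F]
    {k : E → F} {r : ℝ} (hk : Integrable k) (hr : ∀ x, k x ≠ 0 → ‖x‖ ≤ r) (w : E) :
    ‖𝓕 k w - ∫ x, k x‖ ≤ 2 * π * (r * ‖w‖) * ∫ x, ‖k x‖ := by
  rw [fourier_eq, ← integral_sub ((fourierIntegral_convergent_iff w).2 hk) hk, ← integral_const_mul]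
  refine norm_integral_le_of_norm_le (hk.norm.const_mul _) (.of_forall fun x ↦ ?_)
  obtain hx | hx := eq_or_ne (k x) 0
  · simp [hx]
  have char_sub_one : ‖(𝐞 (-inner ℝ x w) : ℂ) - 1‖ ≤ 2 * π * (r * ‖w‖) := by
    calc ‖(𝐞 (-inner ℝ x w) : ℂ) - 1‖ ≤ ‖2 * π * -inner ℝ x w‖ := by
          rw [fourierChar_apply, mul_comm _ Complex.I]
          exact norm_exp_I_mul_ofReal_sub_one_le
      _ = 2 * π * |inner ℝ x w| := by
          rw [mul_neg, norm_neg, norm_mul, norm_of_nonneg two_pi_pos.le, norm_eq_abs]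
      _ ≤ 2 * π * (r * ‖w‖) := by
          gcongr
          exact (abs_real_inner_le_norm x w).trans (by gcongr; exact hr x hx)
  calc ‖𝐞 (-inner ℝ x w) • k x - k x‖ = ‖(𝐞 (-inner ℝ x w) : ℂ) - 1‖ * ‖k x‖ := by
        rw [← norm_smul, sub_smul, one_smul, Circle.smul_def]
    _ ≤ _ := by gcongr

section Duality

variable {μ ν : Measure E}

theorem integral_mul_fourier_mul_fourier [IsFiniteMeasure μ] [SFinite ν] {φ g k : E → ℂ}
    (hφ : Integrable φ μ) (hg : Integrable g ν) (hk : Integrable k) (ξ : ℝ) :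
    ∫ x, φ x * (𝓕[ν] g (ξ • x) * 𝓕 k (ξ • x)) ∂μ
      = ∫ u, 𝓕[μ] φ (ξ • u) * (g ⋆[mul ℂ ℂ, ν] k) u := by
  have dilated_continuous : Continuous fun p : E × E ↦ (ξ • innerₗ E) p.1 p.2 := by
    simpa using! continuous_const.mul continuous_inner
  have dilated (ρ : Measure E) (f : E → ℂ) (w : E) :
      VectorFourier.fourierIntegral 𝐞 ρ (ξ • innerₗ E) f w = 𝓕[ρ] f (ξ • w) := by
    simp [VectorFourier.fourierIntegral]
  have self_adjoint := VectorFourier.integral_fourierIntegral_smul_eq_flip (L := ξ • innerₗ E)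
    continuous_fourierChar dilated_continuous hφ (integrable_convolution_measure (mul ℂ ℂ) hg hk)
  have flip_dilated : (ξ • innerₗ E).flip = ξ • innerₗ E := by
    ext; simp [real_inner_comm]
  simp only [flip_dilated, dilated, smul_eq_mul] at self_adjoint
  rw [self_adjoint]
  refine integral_congr_ae (.of_forall fun x ↦ congrArg (φ x * ·) ?_)
  exact (fourier_convolution_measure (mul ℂ ℂ) hg hk (ξ • x)).symm

variable [IsFiniteMeasure μ] [IsFiniteMeasure ν] {k : E → ℂ} {M ξ : ℝ}

theorem eLpNorm_two_fourier_convolution_comp_smul_le {φ : E → ℂ} {A : ℝ}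
    (hφ : AEStronglyMeasurable φ μ) (hA : ∀ᵐ x ∂μ, ‖φ x‖ ≤ A) (hk : Integrable k)
    (hM : ∀ x, ‖k x‖ ≤ M) (hξ : ξ ≠ 0) :
    eLpNorm (fun u ↦ 𝓕 (φ ⋆[mul ℂ ℂ, μ] k) (ξ • u)) 2 volume
      ≤ ENNReal.ofReal √|(ξ ^ finrank ℝ E)⁻¹|
        * (ENNReal.ofReal A * eLpNorm (fun u ↦ ∫ x, ‖k (u - x)‖ ∂μ) 2 volume) := by
  have φ_integrable : Integrable φ μ := .of_bound hφ A hA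
  have convolution_integrable := integrable_convolution_measure (mul ℂ ℂ) φ_integrable hk
  have convolution_memLp : MemLp (φ ⋆[mul ℂ ℂ, μ] k) 2 :=
    memLp_two_of_norm_le convolution_integrable
      (norm_convolution_le_of_norm_le (mul ℂ ℂ) φ_integrable hM)
  rw [eLpNorm_comp_smul volume _ hξ, eLpNorm_two_fourier convolution_integrable convolution_memLp,
    sqrt_eq_rpow, ← ENNReal.ofReal_rpow_of_nonneg (abs_nonneg _) (by norm_num),
    one_div (2 : ℝ≥0∞), ENNReal.toReal_inv, ENNReal.toReal_ofNat, one_div]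
  gcongr
  refine eLpNorm_le_mul_eLpNorm_of_ae_le_mul ?_ 2
  filter_upwards [(integrable_const (μ := μ) (1 : ℝ)).ae_convolution_exists (mul ℝ ℝ) hk.norm]
    with u hu
  calc ‖(φ ⋆[mul ℂ ℂ, μ] k) u‖ ≤ ∫ x, A * ‖k (u - x)‖ ∂μ :=
        norm_integral_le_of_norm_le (by simpa [ConvolutionExistsAt] using hu.const_mul A)
          (hA.mono fun x hx ↦ by simpa using mul_le_mul_of_nonneg_right hx (norm_nonneg _))
    _ ≤ A * ‖∫ x, ‖k (u - x)‖ ∂μ‖ := by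
        rw [integral_const_mul, norm_of_nonneg (integral_nonneg fun _ ↦ norm_nonneg _)]

theorem enorm_integral_fourier_le_of_mul_fourier_eq_one {φ g : E → ℂ} {c : ℝ}
    (hφ : Integrable φ μ) (hg : Integrable g ν) (hk : Integrable k) (hc : 0 < c)
    (hμ : ∀ᵐ x ∂μ, φ x * 𝓕 k (ξ • x) = 1)
    (hν : ∀ᵐ y ∂ν, ∀ u, k (u - y) ≠ 0 → c ≤ ‖𝓕 k (ξ • u)‖) :
    ‖∫ x, 𝓕[ν] g (ξ • x) ∂μ‖ₑ
      ≤ ENNReal.ofReal c⁻¹ * (eLpNorm (fun u ↦ 𝓕 (φ ⋆[mul ℂ ℂ, μ] k) (ξ • u)) 2 volume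
        * eLpNorm (g ⋆[mul ℂ ℂ, ν] k) 2 volume) := by
  set G : E → ℂ := fun u ↦ 𝓕 (φ ⋆[mul ℂ ℂ, μ] k) (ξ • u)
  set N : E → ℂ := g ⋆[mul ℂ ℂ, ν] k with N_def
  have G_continuous : Continuous G :=
    (continuous_fourier_of_integrable (integrable_convolution_measure _ hφ hk)).comp
      (continuous_const_smul ξ)
  have transfer : ∫ x, 𝓕[ν] g (ξ • x) ∂μ = ∫ u, 𝓕[μ] φ (ξ • u) * N u := by
    rw [N_def, ← integral_mul_fourier_mul_fourier hφ hg hk ξ]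
    refine integral_congr_ae (hμ.mono fun x hx ↦ ?_)
    simp only [mul_left_comm (φ x), hx, mul_one]
  have pointwise (u : E) : ‖𝓕[μ] φ (ξ • u) * N u‖ ≤ c⁻¹ * ‖(G • N) u‖ := by
    obtain hu | hu := eq_or_ne (N u) 0
    · simp [hu]
    have factor : G u = 𝓕[μ] φ (ξ • u) * 𝓕 k (ξ • u) :=
      fourier_convolution_measure (mul ℂ ℂ) hφ hk (ξ • u)
    have lower : 1 ≤ c⁻¹ * ‖𝓕 k (ξ • u)‖ :=
      (one_le_inv_mul₀ hc).2 (of_convolution_ne_zero hν hu)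
    calc ‖𝓕[μ] φ (ξ • u) * N u‖ ≤ c⁻¹ * ‖𝓕 k (ξ • u)‖ * ‖𝓕[μ] φ (ξ • u) * N u‖ :=
          le_mul_of_one_le_left (norm_nonneg _) lower
      _ = c⁻¹ * ‖(G • N) u‖ := by
          rw [Pi.smul_apply', smul_eq_mul, factor, norm_mul, norm_mul, norm_mul]
          ring
  calc ‖∫ x, 𝓕[ν] g (ξ • x) ∂μ‖ₑ
      ≤ eLpNorm (fun u ↦ 𝓕[μ] φ (ξ • u) * N u) 1 volume := by
        rw [transfer, eLpNorm_one_eq_lintegral_enorm]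
        exact enorm_integral_le_lintegral_enorm _
    _ ≤ ENNReal.ofReal c⁻¹ * eLpNorm (G • N) 1 volume :=
        eLpNorm_le_mul_eLpNorm_of_ae_le_mul (.of_forall pointwise) 1
    _ ≤ ENNReal.ofReal c⁻¹ * (eLpNorm G 2 volume * eLpNorm N 2 volume) := by
        gcongr
        exact eLpNorm_smul_le_mul_eLpNorm
          (integrable_convolution_measure _ hg hk).aestronglyMeasurable
          G_continuous.aestronglyMeasurable

theorem enorm_integral_fourier_one_le {c : ℝ} (hk : Integrable k) (hM : ∀ x, ‖k x‖ ≤ M)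
    (hξ : ξ ≠ 0) (hc : 0 < c) (hμ : ∀ᵐ x ∂μ, c ≤ ‖𝓕 k (ξ • x)‖)
    (hν : ∀ᵐ y ∂ν, ∀ u, k (u - y) ≠ 0 → c ≤ ‖𝓕 k (ξ • u)‖) :
    ‖∫ x, 𝓕[ν] (fun _ ↦ (1 : ℂ)) (ξ • x) ∂μ‖ₑ
      ≤ ENNReal.ofReal (c⁻¹ ^ 2) * ENNReal.ofReal √|(ξ ^ finrank ℝ E)⁻¹|
        * (eLpNorm (fun u ↦ ∫ x, ‖k (u - x)‖ ∂μ) 2 volume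
          * eLpNorm (fun u ↦ ∫ y, ‖k (u - y)‖ ∂ν) 2 volume) := by
  set φ : E → ℂ := fun x ↦ (𝓕 k (ξ • x))⁻¹
  have φ_measurable : AEStronglyMeasurable φ μ :=
    ((continuous_fourier_of_integrable hk).comp
      (continuous_const_smul ξ)).measurable.inv.aestronglyMeasurable
  have φ_bound : ∀ᵐ x ∂μ, ‖φ x‖ ≤ c⁻¹ :=
    hμ.mono fun x hx ↦ by simpa only [φ, norm_inv] using inv_anti₀ hc hx
  have φ_mul : ∀ᵐ x ∂μ, φ x * 𝓕 k (ξ • x) = 1 :=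
    hμ.mono fun x hx ↦ inv_mul_cancel₀ (norm_pos_iff.1 (hc.trans_le hx))
  have norm_one_convolution_le (u : E) :
      ‖((fun _ ↦ (1 : ℂ)) ⋆[mul ℂ ℂ, ν] k) u‖ ≤ ∫ y, ‖k (u - y)‖ ∂ν := by
    simpa [convolution_def] using norm_integral_le_integral_norm (μ := ν) fun y ↦ k (u - y)
  calc ‖∫ x, 𝓕[ν] (fun _ ↦ (1 : ℂ)) (ξ • x) ∂μ‖ₑ
      ≤ ENNReal.ofReal c⁻¹ * (eLpNorm (fun u ↦ 𝓕 (φ ⋆[mul ℂ ℂ, μ] k) (ξ • u)) 2 volume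
          * eLpNorm ((fun _ ↦ (1 : ℂ)) ⋆[mul ℂ ℂ, ν] k) 2 volume) :=
        enorm_integral_fourier_le_of_mul_fourier_eq_one (.of_bound φ_measurable c⁻¹ φ_bound)
          (integrable_const 1) hk hc φ_mul hν
    _ ≤ ENNReal.ofReal c⁻¹ * (ENNReal.ofReal √|(ξ ^ finrank ℝ E)⁻¹|
          * (ENNReal.ofReal c⁻¹ * eLpNorm (fun u ↦ ∫ x, ‖k (u - x)‖ ∂μ) 2 volume)
          * eLpNorm (fun u ↦ ∫ y, ‖k (u - y)‖ ∂ν) 2 volume) := by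
        gcongr
        · exact eLpNorm_two_fourier_convolution_comp_smul_le φ_measurable φ_bound hk hM hξ
        · exact eLpNorm_mono_real norm_one_convolution_le
    _ = _ := by
        rw [ENNReal.ofReal_pow (by positivity)]
        ring

theorem memLp_two_integral_norm_sub (hk : Integrable k) (hM : ∀ x, ‖k x‖ ≤ M) :
    MemLp (fun u ↦ ∫ x, ‖k (u - x)‖ ∂μ) 2 := by
  have one_integrable : Integrable (fun _ ↦ (1 : ℝ)) μ := integrable_const 1
  have as_convolution :
      (fun u ↦ ∫ x, ‖k (u - x)‖ ∂μ) = (fun _ ↦ (1 : ℝ)) ⋆[mul ℝ ℝ, μ] fun x ↦ ‖k x‖ := by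
    ext u
    simp [convolution_def]
  rw [as_convolution]
  exact memLp_two_of_norm_le (integrable_convolution_measure (mul ℝ ℝ) one_integrable hk.norm)
    (norm_convolution_le_of_norm_le (mul ℝ ℝ) one_integrable fun x ↦ (norm_norm _).trans_le (hM x))

theorem norm_integral_fourier_one_le {c : ℝ} (hk : Integrable k) (hM : ∀ x, ‖k x‖ ≤ M)
    (hξ : ξ ≠ 0) (hc : 0 < c) (hμ : ∀ᵐ x ∂μ, c ≤ ‖𝓕 k (ξ • x)‖)
    (hν : ∀ᵐ y ∂ν, ∀ u, k (u - y) ≠ 0 → c ≤ ‖𝓕 k (ξ • u)‖) :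
    ‖∫ x, 𝓕[ν] (fun _ ↦ (1 : ℂ)) (ξ • x) ∂μ‖
      ≤ c⁻¹ ^ 2 * √|(ξ ^ finrank ℝ E)⁻¹|
        * (√(∫ u, (∫ x, ‖k (u - x)‖ ∂μ) ^ 2) * √(∫ u, (∫ y, ‖k (u - y)‖ ∂ν) ^ 2)) := by
  have bound := enorm_integral_fourier_one_le hk hM hξ hc hμ hν
  rw [eLpNorm_two_eq_ofReal_sqrt (memLp_two_integral_norm_sub hk hM),
    eLpNorm_two_eq_ofReal_sqrt (memLp_two_integral_norm_sub hk hM),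
    ← ENNReal.ofReal_mul (by positivity), ← ENNReal.ofReal_mul (by positivity),
    ← ENNReal.ofReal_mul (by positivity), ← ofReal_norm,
    ENNReal.ofReal_le_ofReal_iff (by positivity)] at bound
  simpa only [norm_eq_abs, sq_abs] using bound

end Duality

section Ball

theorem half_volume_le_norm_fourier_indicator {S : Set E} {r : ℝ} (hS : MeasurableSet S)
    (hr : S ⊆ closedBall 0 r) {w : E} (hw : 4 * π * (r * ‖w‖) ≤ 1) :
    volume.real S / 2 ≤ ‖𝓕 (S.indicator fun _ ↦ (1 : ℂ)) w‖ := by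
  have volume_ne_top : volume S ≠ ∞ := measure_ne_top_of_subset hr measure_closedBall_lt_top.ne
  have close := norm_fourier_sub_integral_le (k := S.indicator fun _ ↦ (1 : ℂ)) (r := r)
    ((integrable_indicator_iff hS).2 (integrableOn_const volume_ne_top))
    (fun x hx ↦ mem_closedBall_zero_iff.1 (hr (Set.mem_of_indicator_ne_zero hx))) w
  simp only [norm_indicator_eq_indicator_norm, norm_one, integral_indicator hS,
    setIntegral_const, smul_eq_mul, mul_one, Complex.real_smul] at close
  have mass_norm : ‖(volume.real S : ℂ)‖ = volume.real S := by simp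
  have triangle := norm_sub_norm_le (volume.real S : ℂ) (𝓕 (S.indicator fun _ ↦ (1 : ℂ)) w)
  rw [norm_sub_rev, mass_norm] at triangle
  linarith [mul_le_mul_of_nonneg_right hw (measureReal_nonneg (μ := volume) (s := S))]

theorem norm_integral_fourier_one_le_of_closedBall {μ ν : Measure E} [IsFiniteMeasure μ]
    [IsFiniteMeasure ν] {r R ξ : ℝ} (hr : 0 < r) (hμ : ∀ᵐ x ∂μ, ‖x‖ ≤ R)
    (hν : ∀ᵐ y ∂ν, ‖y‖ ≤ R) (hξ₀ : ξ ≠ 0) (hξ : 4 * π * (r * (|ξ| * (r + R))) ≤ 1) :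
    ‖∫ x, 𝓕[ν] (fun _ ↦ (1 : ℂ)) (ξ • x) ∂μ‖
      ≤ (volume.real (closedBall (0 : E) r) / 2)⁻¹ ^ 2 * √|(ξ ^ finrank ℝ E)⁻¹|
        * (√(∫ u, μ.real (closedBall u r) ^ 2) * √(∫ u, ν.real (closedBall u r) ^ 2)) := by
  set k : E → ℂ := (closedBall 0 r).indicator fun _ ↦ 1
  have k_integrable : Integrable k :=
    (integrable_indicator_iff measurableSet_closedBall).2
      (integrableOn_const measure_closedBall_lt_top.ne)
  have k_norm_le (x : E) : ‖k x‖ ≤ 1 := by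
    simpa using norm_indicator_le_norm_self (s := closedBall (0 : E) r) (fun _ ↦ (1 : ℂ)) x
  have integral_norm_k (ρ : Measure E) (u : E) :
      ∫ x, ‖k (u - x)‖ ∂ρ = ρ.real (closedBall u r) := by
    rw [← integral_indicator_one measurableSet_closedBall]
    classical
    congr with x
    simp [k, Set.indicator_apply, dist_eq_norm, norm_sub_rev u, apply_ite norm]
  have lower {u : E} (hu : ‖u‖ ≤ r + R) :
      volume.real (closedBall (0 : E) r) / 2 ≤ ‖𝓕 k (ξ • u)‖ := by
    refine half_volume_le_norm_fourier_indicator measurableSet_closedBall subset_rfl (hξ.trans' ?_)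
    rw [norm_smul, norm_eq_abs]
    gcongr
  have volume_pos : 0 < volume.real (closedBall (0 : E) r) :=
    ENNReal.toReal_pos (measure_closedBall_pos volume 0 hr).ne' measure_closedBall_lt_top.ne
  simp only [← integral_norm_k μ, ← integral_norm_k ν]
  refine norm_integral_fourier_one_le k_integrable k_norm_le hξ₀ (half_pos volume_pos)
    (hμ.mono fun x hx ↦ lower (by linarith)) (hν.mono fun y hy u hu ↦ lower ?_)
  have hu_sub : ‖u - y‖ ≤ r := mem_closedBall_zero_iff.1 (Set.mem_of_indicator_ne_zero hu)
  linarith [norm_sub_norm_le u y]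

end Ball

section Regularization

variable {P : E → ℝ} {μ ν : Measure E} [IsFiniteMeasure μ] [IsFiniteMeasure ν] {δ M r : ℝ}

theorem memLp_two_regularization (hP : Integrable P) (hM : ∀ x, ‖P x‖ ≤ M) (hδ : δ ≠ 0) :
    MemLp (regularization P δ μ) 2 := by
  have one_integrable : Integrable (fun _ ↦ (1 : ℝ)) μ := integrable_const 1
  let Pδ : E → ℝ := fun x ↦ (δ ^ finrank ℝ E)⁻¹ * P (δ⁻¹ • x)
  have Pδ_integrable : Integrable Pδ := (hP.comp_smul (inv_ne_zero hδ)).const_mul _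
  have Pδ_bound (x : E) : ‖Pδ x‖ ≤ ‖(δ ^ finrank ℝ E)⁻¹‖ * M := by
    rw [norm_mul]
    gcongr
    exact hM _
  have as_convolution : regularization P δ μ = (fun _ ↦ (1 : ℝ)) ⋆[mul ℝ ℝ, μ] Pδ := by
    ext x
    simp [convolution_def, regularization, Pδ]
  rw [as_convolution]
  exact memLp_two_of_norm_le (integrable_convolution_measure _ one_integrable Pδ_integrable)
    (norm_convolution_le_of_norm_le _ one_integrable Pδ_bound)

theorem sqrt_integral_measureReal_closedBall_le (hP : Measurable P) (hP_integrable : Integrable P)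
    (hM : ∀ x, ‖P x‖ ≤ M) (hP_lower : ∀ x, (closedBall 0 (1 / 2)).indicator 1 x ≤ P x)
    (hδ : 0 < δ) (hr : r ≤ δ / 2) :
    √(∫ x, μ.real (closedBall x r) ^ 2)
      ≤ δ ^ finrank ℝ E * √(∫ x, regularization P δ μ x ^ 2) := by
  have regularization_sq_integrable : Integrable fun x ↦ regularization P δ μ x ^ 2 :=
    (memLp_two_regularization hP_integrable hM hδ.ne').integrable_sq
  calc √(∫ x, μ.real (closedBall x r) ^ 2)
      ≤ √(∫ x, (δ ^ finrank ℝ E) ^ 2 * regularization P δ μ x ^ 2) := by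
        gcongr √?_
        refine integral_mono_of_nonneg (.of_forall fun x ↦ by positivity)
          (regularization_sq_integrable.const_mul _) (.of_forall fun x ↦ ?_)
        simp only [← mul_pow]
        gcongr
        exact measureReal_closedBall_le_regularization hP hM hP_lower hδ hr x
    _ = δ ^ finrank ℝ E * √(∫ x, regularization P δ μ x ^ 2) := by
        rw [integral_const_mul, sqrt_mul (by positivity), sqrt_sq (by positivity)]

theorem norm_integral_fourier_one_le_regularization (hP : Measurable P)
    (hP_integrable : Integrable P) (hM : ∀ x, ‖P x‖ ≤ M)
    (hP_lower : ∀ x, (closedBall 0 (1 / 2)).indicator 1 x ≤ P x) (hδ : δ ∈ Set.Ioc 0 1)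
    (hμ : ∀ᵐ x ∂μ, ‖x‖ ≤ 1) (hν : ∀ᵐ y ∂ν, ‖y‖ ≤ 1) {ξ : ℝ} (hξ : δ⁻¹ ≤ |ξ|)
    (hξ' : |ξ| ≤ 2 * δ⁻¹) :
    ‖∫ x, 𝓕[ν] (fun _ ↦ (1 : ℂ)) (ξ • x) ∂μ‖
      ≤ (2 * 64 ^ finrank ℝ E / volume.real (closedBall (0 : E) 1)) ^ 2
        * (√(δ ^ finrank ℝ E)
          * (√(∫ x, regularization P δ μ x ^ 2) * √(∫ x, regularization P δ ν x ^ 2))) := by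
  obtain ⟨hδ₀, hδ₁⟩ := hδ
  set d := finrank ℝ E
  set ω := volume.real (closedBall (0 : E) 1)
  have small_phase : 4 * π * (δ / 64 * (|ξ| * (δ / 64 + 1))) ≤ 1 := by
    have δ_mul_ξ_le : δ * |ξ| ≤ 2 := by
      rwa [← div_eq_mul_inv, le_div_iff₀' hδ₀] at hξ'
    calc 4 * π * (δ / 64 * (|ξ| * (δ / 64 + 1)))
        = 4 * π * (δ * |ξ|) * (δ / 64 + 1) / 64 := by ring
      _ ≤ 4 * 3.15 * 2 * (1 / 64 + 1) / 64 := by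
        gcongr
        exact pi_lt_d2.le
      _ ≤ 1 := by norm_num
  have ξ_ne_zero : ξ ≠ 0 := abs_pos.1 ((inv_pos.2 hδ₀).trans_le hξ)
  have dilation_le : √|(ξ ^ d)⁻¹| ≤ √(δ ^ d) := by
    rw [abs_inv, abs_pow, ← inv_pow]
    gcongr
    exact inv_le_of_inv_le₀ hδ₀ hξ
  have ball_le (ρ : Measure E) [IsFiniteMeasure ρ] := sqrt_integral_measureReal_closedBall_le
    (μ := ρ) hP hP_integrable hM hP_lower hδ₀ (r := δ / 64) (by linarith)
  calc ‖∫ x, 𝓕[ν] (fun _ ↦ (1 : ℂ)) (ξ • x) ∂μ‖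
      ≤ (((δ / 64) ^ d * ω) / 2)⁻¹ ^ 2 * √|(ξ ^ d)⁻¹|
          * (√(∫ u, μ.real (closedBall u (δ / 64)) ^ 2)
            * √(∫ u, ν.real (closedBall u (δ / 64)) ^ 2)) := by
        rw [← Measure.addHaar_real_closedBall' volume 0 (by positivity)]
        exact norm_integral_fourier_one_le_of_closedBall (by positivity) hμ hν ξ_ne_zero small_phase
    _ ≤ (((δ / 64) ^ d * ω) / 2)⁻¹ ^ 2 * √(δ ^ d)
          * ((δ ^ d * √(∫ x, regularization P δ μ x ^ 2))
            * (δ ^ d * √(∫ x, regularization P δ ν x ^ 2))) := by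
        gcongr
        · exact ball_le μ
        · exact ball_le ν
    _ = _ := by
        rw [div_pow]
        field_simp

end Regularization

theorem stmt2_general (E : Type*) [NormedAddCommGroup E] [InnerProductSpace ℝ E]
    [FiniteDimensional ℝ E] [MeasurableSpace E] [BorelSpace E] :
    ∃ C > (0 : ℝ), ∀ P : E → ℝ, Measurable P →
      (∀ x, (closedBall 0 (1 / 2)).indicator 1 x ≤ P x) →
      (∀ x, P x ≤ (closedBall 0 1).indicator 1 x) →
      ∀ δ ∈ Set.Ioc (0 : ℝ) 1, ∀ s t : ℝ,
      ∀ μ ν : Measure E, [IsFiniteMeasure μ] → [IsFiniteMeasure ν] →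
      μ (closedBall 0 1)ᶜ = 0 → ν (closedBall 0 1)ᶜ = 0 →
      ∫ x, regularization P δ μ x ^ 2 ≤ δ ^ (-finrank ℝ E + s) →
      ∫ x, regularization P δ ν x ^ 2 ≤ δ ^ (-finrank ℝ E + t) →
      ∀ ξ : ℝ, δ⁻¹ ≤ |ξ| → |ξ| ≤ 2 * δ⁻¹ →
      ‖∫ x, ∫ y, Complex.exp (-(2 * π * ξ * inner ℝ x y) * Complex.I) ∂ν ∂μ‖
        ≤ C * δ ^ ((s + t - finrank ℝ E) / 2) := by
  have volume_pos : 0 < volume.real (closedBall (0 : E) 1) :=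
    ENNReal.toReal_pos (measure_closedBall_pos volume 0 one_pos).ne' measure_closedBall_lt_top.ne
  refine ⟨(2 * 64 ^ finrank ℝ E / volume.real (closedBall (0 : E) 1)) ^ 2, by positivity, ?_⟩
  intro P hP hP_lower hP_upper δ hδ s t μ ν _ _ hμ hν hμs hνt ξ hξ hξ'
  have P_norm_le (x : E) : ‖P x‖ ≤ (closedBall 0 1).indicator 1 x := by
    rw [norm_of_nonneg ((Set.indicator_nonneg (fun _ _ ↦ zero_le_one) x).trans (hP_lower x))]
    exact hP_upper x
  have P_integrable : Integrable P := ((integrable_indicator_iff measurableSet_closedBall).2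
    (integrableOn_const measure_closedBall_lt_top.ne)).mono' hP.aestronglyMeasurable
      (.of_forall P_norm_le)
  have P_bounded (x : E) : ‖P x‖ ≤ 1 :=
    (P_norm_le x).trans (Set.indicator_apply_le' (fun _ ↦ le_rfl) fun _ ↦ zero_le_one)
  have sqrt_rpow (a : ℝ) : √(δ ^ a) = δ ^ (a / 2) := by
    rw [sqrt_eq_rpow, ← rpow_mul hδ.1.le, mul_one_div]
  simp only [← fourierIntegral_one_smul]
  calc ‖∫ x, 𝓕[ν] (fun _ ↦ (1 : ℂ)) (ξ • x) ∂μ‖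
      ≤ (2 * 64 ^ finrank ℝ E / volume.real (closedBall (0 : E) 1)) ^ 2
          * (√(δ ^ finrank ℝ E)
            * (√(∫ x, regularization P δ μ x ^ 2) * √(∫ x, regularization P δ ν x ^ 2))) :=
        norm_integral_fourier_one_le_regularization hP P_integrable P_bounded hP_lower hδ
          (by simpa [ae_iff, Set.compl_def] using hμ) (by simpa [ae_iff, Set.compl_def] using hν)
          hξ hξ'
    _ ≤ (2 * 64 ^ finrank ℝ E / volume.real (closedBall (0 : E) 1)) ^ 2
          * (√(δ ^ (finrank ℝ E : ℝ))
            * (√(δ ^ (-finrank ℝ E + s)) * √(δ ^ (-finrank ℝ E + t)))) := by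
        rw [rpow_natCast]
        gcongr
    _ = _ := by
        rw [sqrt_rpow, sqrt_rpow, sqrt_rpow, ← rpow_add hδ.1, ← rpow_add hδ.1]
        ring_nf

end

/-- Base case `n = 2`: if the `δ`-regularizations satisfy `‖μ_δ‖₂² ≤ δ^{s-1}` and
`‖ν_δ‖₂² ≤ δ^{t-1}`, then `|(μ⊠ν)^(ξ)| ≤ C δ^{(s+t-1)/2}` for `δ⁻¹ ≤ |ξ| ≤ 2δ⁻¹`. -/
theorem stmt2 :
    ∃ C > (0:ℝ), ∀ P : ℝ → ℝ, ContDiff ℝ (⊤ : ℕ∞) P →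
      (∀ x y : ℝ, |x| ≤ |y| → P y ≤ P x) →
      (∀ x, Set.indicator (Set.Icc (-(1:ℝ)/2) (1/2)) 1 x ≤ P x) →
      (∀ x, P x ≤ Set.indicator (Set.Icc (-1:ℝ) 1) 1 x) →
      ∀ δ : ℝ, δ ∈ Set.Ioc (0:ℝ) 1 →
      ∀ s : ℝ, s ∈ Set.Icc (0:ℝ) 1 → ∀ t : ℝ, t ∈ Set.Icc (0:ℝ) 1 →
      ∀ μ ν : Measure ℝ, IsProbabilityMeasure μ → IsProbabilityMeasure ν →
      μ (Set.Icc (-1:ℝ) 1)ᶜ = 0 → ν (Set.Icc (-1:ℝ) 1)ᶜ = 0 →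
      (∫ x : ℝ, (∫ y, δ⁻¹ * P ((x - y) / δ) ∂μ) ^ 2) ≤ δ ^ (-1 + s) →
      (∫ x : ℝ, (∫ y, δ⁻¹ * P ((x - y) / δ) ∂ν) ^ 2) ≤ δ ^ (-1 + t) →
      ∀ ξ : ℝ, δ⁻¹ ≤ |ξ| → |ξ| ≤ 2 * δ⁻¹ →
      ‖∫ x, ∫ y, Complex.exp (-(2 * Real.pi * ξ * (x * y)) * Complex.I) ∂ν ∂μ‖ ≤
        C * δ ^ ((s + t - 1) / 2) := by
  obtain ⟨C, C_pos, bound⟩ := stmt2_general ℝ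
  refine ⟨C, C_pos, fun P hP _ hP_lower hP_upper δ hδ s _ t _ μ ν _ _ hμ hν hμs hνt ξ hξ hξ' ↦ ?_⟩
  have inner_eq_mul (x y : ℝ) : inner ℝ x y = x * y := mul_comm y x
  simp only [regularization, Real.closedBall_eq_Icc, Module.finrank_self, Nat.cast_one, pow_one,
    zero_sub, zero_add, ← neg_div, smul_eq_mul, inv_mul_eq_div _ (_ - _), inner_eq_mul,
    Complex.ofReal_mul] at bound
  exact bound P hP.continuous.measurable hP_lower hP_upper δ hδ s t μ ν hμ hν hμs hνt ξ hξ hξ'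
end
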